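/- For every t ≥ 1, s_max(t) = sfs_max(t) + 1, where s_max(t) is the maximum size of a Sidon set in F_2^t and sfs_max(t) is the maximum size of a sum-free Sidon set in F_2^t. -/

import Mathlib

/-- A subset `M` of `𝔽₂ᵗ` is Sidon if `m₁+m₂ ≠ m₃+m₄` for pairwise distinct elements. -/
def IsSidon {t : ℕ} (M : Finset (Fin t → ZMod 2)) : Prop :=
  ∀ m₁ ∈ M, ∀ m₂ ∈ M, ∀ m₃ ∈ M, ∀ m₄ ∈ M,
    (m₁ ≠ m₂ ∧ m₁ ≠ m₃ ∧ m₁ ≠ m₄ ∧ m₂ ≠ m₃ ∧ m₂ ≠ m₄ ∧ m₃ ≠ m₄) →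
    m₁ + m₂ ≠ m₃ + m₄

/-- `M` is sum-free if `m₁+m₂ ≠ m₃` for all `m₁,m₂,m₃ ∈ M`. -/
def IsSumFree {t : ℕ} (M : Finset (Fin t → ZMod 2)) : Prop :=
  ∀ m₁ ∈ M, ∀ m₂ ∈ M, ∀ m₃ ∈ M, m₁ + m₂ ≠ m₃

/-- A maximal Sidon set. -/
def IsMaximalSidon {t : ℕ} (M : Finset (Fin t → ZMod 2)) : Prop :=
  IsSidon M ∧ ∀ S : Finset (Fin t → ZMod 2), IsSidon S → M ⊆ S → S = M

/-- Maximum size of a Sidon set in `𝔽₂ᵗ`. -/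
noncomputable def sMax (t : ℕ) : ℕ :=
  sSup {n : ℕ | ∃ M : Finset (Fin t → ZMod 2), IsSidon M ∧ M.card = n}

/-- 2-sums of `M`. -/
def twoSums {t : ℕ} (M : Finset (Fin t → ZMod 2)) : Finset (Fin t → ZMod 2) :=
  (M ×ˢ M).image fun p => p.1 + p.2

/-- 2-star-sums of `M` (sums of two distinct elements). -/
def twoStarSums {t : ℕ} (M : Finset (Fin t → ZMod 2)) : Finset (Fin t → ZMod 2) :=
  ((M ×ˢ M).filter fun p => p.1 ≠ p.2).image fun p => p.1 + p.2

/-- 3-sums of `M`. -/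
def threeSums {t : ℕ} (M : Finset (Fin t → ZMod 2)) : Finset (Fin t → ZMod 2) :=
  ((M ×ˢ M) ×ˢ M).image fun p => p.1.1 + p.1.2 + p.2

/-- 3-star-sums of `M` (sums of three pairwise distinct elements). -/
def threeStarSums {t : ℕ} (M : Finset (Fin t → ZMod 2)) : Finset (Fin t → ZMod 2) :=
  (((M ×ˢ M) ×ˢ M).filter fun p => p.1.1 ≠ p.1.2 ∧ p.1.1 ≠ p.2 ∧ p.1.2 ≠ p.2).image
    fun p => p.1.1 + p.1.2 + p.2

/-- 4-sums of `M`. -/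
def fourSums {t : ℕ} (M : Finset (Fin t → ZMod 2)) : Finset (Fin t → ZMod 2) :=
  (((M ×ˢ M) ×ˢ M) ×ˢ M).image fun p => p.1.1.1 + p.1.1.2 + p.1.2 + p.2

/-- Maximum size of a sum-free Sidon set in `𝔽₂ᵗ`. -/
noncomputable def sfsMax (t : ℕ) : ℕ :=
  sSup {n : ℕ | ∃ M : Finset (Fin t → ZMod 2), IsSumFree M ∧ IsSidon M ∧ M.card = n}

theorem vec_add_self {t : ℕ} (x : Fin t → ZMod 2) : x + x = 0 := by
  funext i
  exact CharTwo.add_self_eq_zero (x i)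

theorem sidon_bdd (t : ℕ) :
    BddAbove {n : ℕ | ∃ M : Finset (Fin t → ZMod 2), IsSidon M ∧ M.card = n} := by
  refine ⟨Fintype.card (Fin t → ZMod 2), ?_⟩
  rintro n ⟨M, -, rfl⟩
  exact Finset.card_le_univ M

theorem sfs_bdd (t : ℕ) :
    BddAbove {n : ℕ | ∃ M : Finset (Fin t → ZMod 2), IsSumFree M ∧ IsSidon M ∧ M.card = n} := by
  refine ⟨Fintype.card (Fin t → ZMod 2), ?_⟩
  rintro n ⟨M, -, -, rfl⟩
  exact Finset.card_le_univ M

theorem sidon_insert_zero {t : ℕ} {M : Finset (Fin t → ZMod 2)} (hf : IsSumFree M)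
    (hs : IsSidon M) : IsSidon (insert 0 M) := by
  intro a ha b hb c hc d hd hne h
  obtain ⟨h1, h2, h3, h4, h5, h6⟩ := hne
  rw [Finset.mem_insert] at ha hb hc hd
  rcases ha with rfl | ha
  · rw [zero_add] at h
    exact hf c (hc.resolve_left h2.symm) d (hd.resolve_left h3.symm) b
      (hb.resolve_left h1.symm) h.symm
  rcases hb with rfl | hb
  · rw [add_zero] at h
    exact hf c (hc.resolve_left h4.symm) d (hd.resolve_left h5.symm) a ha h.symm
  rcases hc with rfl | hc
  · rw [zero_add] at h
    exact hf a ha b hb d (hd.resolve_left h6.symm) h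
  rcases hd with rfl | hd
  · rw [add_zero] at h
    exact hf a ha b hb c hc h
  exact hs a ha b hb c hc d hd ⟨h1, h2, h3, h4, h5, h6⟩ h

theorem sidon_translate {t : ℕ} {M : Finset (Fin t → ZMod 2)} (hs : IsSidon M)
    (v : Fin t → ZMod 2) : IsSidon (M.image (fun x => x + v)) := by
  intro a ha b hb c hc d hd hne h
  simp only [Finset.mem_image] at ha hb hc hd
  obtain ⟨a, ha, rfl⟩ := ha
  obtain ⟨b, hb, rfl⟩ := hb
  obtain ⟨c, hc, rfl⟩ := hc
  obtain ⟨d, hd, rfl⟩ := hd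
  simp only [ne_eq, add_left_inj] at hne
  refine hs a ha b hb c hc d hd hne ?_
  rw [add_add_add_comm, add_add_add_comm c] at h
  exact add_right_cancel h

theorem sumFree_erase_zero {t : ℕ} {M : Finset (Fin t → ZMod 2)} (hs : IsSidon M)
    (h0 : 0 ∈ M) : IsSumFree (M.erase 0) := by
  intro a ha b hb c hc h
  rw [Finset.mem_erase] at ha hb hc
  refine hs a ha.2 b hb.2 c hc.2 0 h0 ⟨?_, ?_, ha.1, ?_, hb.1, hc.1⟩ (by rw [h, add_zero])
  · rintro rfl
    exact hc.1 (by rw [← h, vec_add_self])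
  · rintro rfl
    exact hb.1 (by simpa using h)
  · rintro rfl
    exact ha.1 (by simpa using h)

theorem sMax_eq_sfsMax_add_one (t : ℕ) (ht : 1 ≤ t) :
    sMax t = sfsMax t + 1 := by
  apply le_antisymm
  · have hne : {n : ℕ | ∃ M : Finset (Fin t → ZMod 2), IsSidon M ∧ M.card = n}.Nonempty :=
      ⟨0, ∅, by intro a ha; simp at ha, rfl⟩
    refine csSup_le hne ?_
    rintro n ⟨M, hM, rfl⟩
    rcases M.eq_empty_or_nonempty with rfl | ⟨m, hm⟩
    · simp
    have hT := sidon_translate hM m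
    have h0 : (0 : Fin t → ZMod 2) ∈ M.image (fun x => x + m) :=
      Finset.mem_image.2 ⟨m, hm, vec_add_self m⟩
    have hcard : (M.image (fun x => x + m)).card = M.card :=
      Finset.card_image_of_injective _ (add_left_injective m)
    have hle : ((M.image (fun x => x + m)).erase 0).card ≤ sfsMax t := by
      refine le_csSup (sfs_bdd t) ⟨_, sumFree_erase_zero hT h0, ?_, rfl⟩
      intro a ha b hb c hc d hd
      exact hT a (Finset.mem_of_mem_erase ha) b (Finset.mem_of_mem_erase hb)
        c (Finset.mem_of_mem_erase hc) d (Finset.mem_of_mem_erase hd)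
    have := Finset.card_erase_add_one h0
    omega
  · have hne : {n : ℕ | ∃ M : Finset (Fin t → ZMod 2),
        IsSumFree M ∧ IsSidon M ∧ M.card = n}.Nonempty :=
      ⟨0, ∅, by intro a ha; simp at ha, by intro a ha; simp at ha, rfl⟩
    obtain ⟨M, hf, hs, hc⟩ := Nat.sSup_mem hne (sfs_bdd t)
    have h0 : (0 : Fin t → ZMod 2) ∉ M := fun h => hf 0 h 0 h 0 h (add_zero 0)
    have : sfsMax t = M.card := hc.symm
    rw [this]
    exact le_csSup (sidon_bdd t) ⟨insert 0 M, sidon_insert_zero hf hs,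
      Finset.card_insert_of_notMem h0⟩
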